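/- arXiv:0704.3091 — 2 statements merged into one kernel-verified Lean document; each statement's English description precedes it below -/
import Mathlib

section
/- For each fixed n ∈ {0,…,29}, the eight vectors Aₙ, Bₙ, Cₙ, Dₙ, Eₙ, Fₙ, Gₙ, Hₙ form a system of simple roots with Dynkin diagram E₈: each has ⟨X,X⟩_ℝ = 1; the pairs {Aₙ,Fₙ}, {Aₙ,Cₙ}, {Aₙ,Bₙ}, {Cₙ,Dₙ}, {Bₙ,Eₙ}, {Eₙ,Gₙ}, {Gₙ,Hₙ} each have ⟨X,Y⟩_ℝ = −1/2; and every other pair of distinct vectors among them has ⟨X,Y⟩_ℝ = 0. Thus the Gram matrix of (Fₙ, Aₙ, Cₙ, Dₙ, Bₙ, Eₙ, Gₙ, Hₙ) is one half of a Cartan matrix of type E₈. -/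
noncomputable section
open Real Complex

namespace Triacontagonal

/-- The golden ratio. -/
def τ : ℝ := (1 + Real.sqrt 5) / 2

/-- The constant 3^(-1/2) * 5^(-1/4). -/
def k0 : ℝ := (3 : ℝ) ^ (-(1:ℝ)/2) * (5 : ℝ) ^ (-(1:ℝ)/4)

/-- `a` is the positive real with 2a² = 1 + 3^(-1/2)·5^(-1/4)·τ^(3/2). -/
def a : ℝ := Real.sqrt ((1 + k0 * τ ^ ((3:ℝ)/2)) / 2)

/-- `b` is the positive real with 2b² = 1 + 3^(-1/2)·5^(-1/4)·τ^(-3/2). -/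
def b : ℝ := Real.sqrt ((1 + k0 * τ ^ (-((3:ℝ)/2))) / 2)

/-- `c` is the positive real with 2c² = 1 - 3^(-1/2)·5^(-1/4)·τ^(-3/2). -/
def c : ℝ := Real.sqrt ((1 - k0 * τ ^ (-((3:ℝ)/2))) / 2)

/-- `d` is the positive real with 2d² = 1 - 3^(-1/2)·5^(-1/4)·τ^(3/2). -/
def d : ℝ := Real.sqrt ((1 - k0 * τ ^ ((3:ℝ)/2)) / 2)

/-- `cc n = 2 cos(nπ/30)`. -/
def cc (n : ℤ) : ℝ := 2 * Real.cos (n * Real.pi / 30)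

/-- `ω = exp(iπ/30)`, a primitive 60th root of unity. -/
def ω : ℂ := Complex.exp (Real.pi * Complex.I / 30)

def r1 : ℝ := a / cc 9
def r2 : ℝ := b / cc 9
def r3 : ℝ := c / cc 9
def r4 : ℝ := d / cc 9
def r5 : ℝ := a / cc 3
def r6 : ℝ := b / cc 3
def r7 : ℝ := c / cc 3
def r8 : ℝ := d / cc 3

/-- The eight cycles of 30 vectors each in ℂ⁴. -/
def A (n : Fin 30) : Fin 4 → ℂ :=
  ![(r1 : ℂ) * ω ^ (2 * (n : ℕ)), (r4 : ℂ) * ω ^ (22 * (n : ℕ)),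
    (r6 : ℂ) * ω ^ (14 * (n : ℕ) + 1), (r7 : ℂ) * ω ^ (26 * (n : ℕ) + 1)]

def B (n : Fin 30) : Fin 4 → ℂ :=
  ![(r2 : ℂ) * ω ^ (2 * (n : ℕ) + 29), (r3 : ℂ) * ω ^ (22 * (n : ℕ) + 19),
    -((r8 : ℂ) * ω ^ (14 * (n : ℕ) + 24)), -((r5 : ℂ) * ω ^ (26 * (n : ℕ) + 18))]

def C (n : Fin 30) : Fin 4 → ℂ :=
  ![(r3 : ℂ) * ω ^ (2 * (n : ℕ) + 29), -((r2 : ℂ) * ω ^ (22 * (n : ℕ) + 19)),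
    (r5 : ℂ) * ω ^ (14 * (n : ℕ) + 24), -((r8 : ℂ) * ω ^ (26 * (n : ℕ) + 18))]

def D (n : Fin 30) : Fin 4 → ℂ :=
  ![(r4 : ℂ) * ω ^ (2 * (n : ℕ)), -((r1 : ℂ) * ω ^ (22 * (n : ℕ))),
    (r7 : ℂ) * ω ^ (14 * (n : ℕ) + 1), -((r6 : ℂ) * ω ^ (26 * (n : ℕ) + 1))]

def E (n : Fin 30) : Fin 4 → ℂ :=
  ![(r5 : ℂ) * ω ^ (2 * (n : ℕ)), (r8 : ℂ) * ω ^ (22 * (n : ℕ)),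
    -((r2 : ℂ) * ω ^ (14 * (n : ℕ) + 1)), -((r3 : ℂ) * ω ^ (26 * (n : ℕ) + 1))]

def F (n : Fin 30) : Fin 4 → ℂ :=
  ![(r6 : ℂ) * ω ^ (2 * (n : ℕ) + 29), (r7 : ℂ) * ω ^ (22 * (n : ℕ) + 19),
    (r4 : ℂ) * ω ^ (14 * (n : ℕ) + 24), (r1 : ℂ) * ω ^ (26 * (n : ℕ) + 18)]

def G (n : Fin 30) : Fin 4 → ℂ :=
  ![(r7 : ℂ) * ω ^ (2 * (n : ℕ) + 29), -((r6 : ℂ) * ω ^ (22 * (n : ℕ) + 19)),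
    -((r1 : ℂ) * ω ^ (14 * (n : ℕ) + 24)), (r4 : ℂ) * ω ^ (26 * (n : ℕ) + 18)]

def H (n : Fin 30) : Fin 4 → ℂ :=
  ![(r8 : ℂ) * ω ^ (2 * (n : ℕ)), -((r5 : ℂ) * ω ^ (22 * (n : ℕ))),
    -((r3 : ℂ) * ω ^ (14 * (n : ℕ) + 1)), (r2 : ℂ) * ω ^ (26 * (n : ℕ) + 1)]

/-- The set of the 240 vectors. -/
def S : Set (Fin 4 → ℂ) :=
  {v | ∃ n : Fin 30, v = A n ∨ v = B n ∨ v = C n ∨ v = D n ∨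
    v = E n ∨ v = F n ∨ v = G n ∨ v = H n}

/-- The real inner product on ℂ⁴: ⟨v,w⟩_ℝ = Re(Σᵢ vᵢ · conj(wᵢ)). -/
def rinner (v w : Fin 4 → ℂ) : ℝ := (∑ i, v i * star (w i)).re

/-- The associated Euclidean norm. -/
def enorm (v : Fin 4 → ℂ) : ℝ := Real.sqrt (rinner v v)

/-- The Gram matrix of the ordered tuple (Fₙ, Aₙ, Cₙ, Dₙ, Bₙ, Eₙ, Gₙ, Hₙ):
half of a Cartan matrix of type E₈. -/
def G8 : Matrix (Fin 8) (Fin 8) ℝ :=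
  !![1, -(1/2), 0, 0, 0, 0, 0, 0;
     -(1/2), 1, -(1/2), 0, -(1/2), 0, 0, 0;
     0, -(1/2), 1, -(1/2), 0, 0, 0, 0;
     0, 0, -(1/2), 1, 0, 0, 0, 0;
     0, -(1/2), 0, 0, 1, -(1/2), 0, 0;
     0, 0, 0, 0, -(1/2), 1, -(1/2), 0;
     0, 0, 0, 0, 0, -(1/2), 1, -(1/2);
     0, 0, 0, 0, 0, 0, -(1/2), 1]

/-- The ordered system of simple roots (Fₙ, Aₙ, Cₙ, Dₙ, Bₙ, Eₙ, Gₙ, Hₙ). -/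
def simple (n : Fin 30) : Fin 8 → (Fin 4 → ℂ) :=
  ![F n, A n, C n, D n, B n, E n, G n, H n]


def X : ℝ := cc 3
def s3 : ℝ := Real.sqrt 3

lemma t_sq : τ ^ 2 = τ + 1 := by
  have h : Real.sqrt 5 ^ 2 = 5 := Real.sq_sqrt (by norm_num)
  unfold τ; linear_combination h / 4

lemma t_gt : 1.6 < τ := by
  have h : 2.2 < Real.sqrt 5 := Real.lt_sqrt_of_sq_lt (by norm_num)
  unfold τ; linarith

lemma t_lt : τ < 1.7 := by
  have h : Real.sqrt 5 < 2.4 := (Real.sqrt_lt' (by norm_num)).2 (by norm_num)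
  unfold τ; linarith

lemma s_sq : s3 ^ 2 = 3 := Real.sq_sqrt (by norm_num)
lemma s_pos : 0 < s3 := Real.sqrt_pos.2 (by norm_num)

lemma cos5 : Real.cos (π / 5) = τ / 2 := by
  rw [Real.cos_pi_div_five]; unfold τ; ring

lemma X_eq : X = 2 * Real.cos (π / 10) := by
  unfold X cc; congr 2; push_cast; ring

lemma X_pos : 0 < X := by
  rw [X_eq]
  have := Real.cos_pos_of_mem_Ioo (x := π / 10) ⟨by linarith [Real.pi_pos], by linarith [Real.pi_pos]⟩
  linarith

lemma X_sq : X ^ 2 = τ + 2 := by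
  have h := Real.cos_sq (π / 10)
  rw [show 2 * (π / 10) = π / 5 by ring, cos5] at h
  rw [X_eq]; linear_combination 4 * h

lemma cos25 : Real.cos (2 * (π / 5)) = (τ - 1) / 2 := by
  rw [Real.cos_two_mul, cos5]; linear_combination t_sq / 2

lemma sin10 : Real.sin (π / 10) = (τ - 1) / 2 := by
  rw [← cos25, ← Real.cos_pi_div_two_sub]; congr 1; ring

lemma sin5 : Real.sin (π / 5) = X * (τ - 1) / 2 := by
  rw [show π / 5 = 2 * (π / 10) by ring, Real.sin_two_mul, sin10, X_eq]; ring

lemma sin25 : Real.sin (2 * (π / 5)) = X / 2 := by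
  rw [show 2 * (π / 5) = π / 2 - π / 10 by ring, Real.sin_pi_div_two_sub, X_eq]; ring

lemma cc9 : cc 9 = X * (τ - 1) := by
  unfold cc
  rw [show ((9 : ℤ) : ℝ) * π / 30 = π / 2 - π / 5 by push_cast; ring, Real.cos_pi_div_two_sub, sin5]
  ring

lemma inv3 : (cc 3)⁻¹ = X * (3 - τ) / 5 := by
  have h : cc 3 = X := rfl
  rw [h]
  have := X_pos.ne'
  apply inv_eq_of_mul_eq_one_right
  linear_combination (3 - τ) / 5 * X_sq - t_sq / 5

lemma inv9 : (cc 9)⁻¹ = X * (2 * τ - 1) / 5 := by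
  rw [cc9]
  apply inv_eq_of_mul_eq_one_right
  have h1 := X_sq
  have h2 := t_sq
  grind

lemma cos29 : Real.cos (29 * π / 30) = -(s3 * τ + X * (τ - 1)) / 4 := by
  rw [show 29 * π / 30 = π - (π / 5 - π / 6) by ring, Real.cos_pi_sub, Real.cos_sub, cos5, sin5,
    Real.cos_pi_div_six, Real.sin_pi_div_six]
  unfold s3; ring

lemma cos19 : Real.cos (19 * π / 30) = -(s3 * τ - X * (τ - 1)) / 4 := by
  rw [show 19 * π / 30 = π - (π / 5 + π / 6) by ring, Real.cos_pi_sub, Real.cos_add, cos5, sin5,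
    Real.cos_pi_div_six, Real.sin_pi_div_six]
  unfold s3; ring

lemma cos23 : Real.cos (23 * π / 30) = -(s3 * (τ - 1) + X) / 4 := by
  rw [show 23 * π / 30 = π - (2 * (π / 5) - π / 6) by ring, Real.cos_pi_sub, Real.cos_sub, cos25,
    sin25, Real.cos_pi_div_six, Real.sin_pi_div_six]
  unfold s3; ring

lemma cos17 : Real.cos (17 * π / 30) = -(X - s3 * (τ - 1)) / 4 := by
  rw [show 17 * π / 30 = 2 * (π / 5) + π / 6 by ring, Real.cos_add, cos25,
    sin25, Real.cos_pi_div_six, Real.sin_pi_div_six]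
  unfold s3; ring

lemma k0_pos : 0 < k0 := by unfold k0; positivity

lemma k0_sq : k0 ^ 2 = (2 * τ - 1) / 15 := by
  unfold k0
  rw [mul_pow, ← Real.rpow_natCast, ← Real.rpow_natCast, ← Real.rpow_mul (by norm_num),
    ← Real.rpow_mul (by norm_num)]
  norm_num
  rw [Real.rpow_neg (by norm_num), ← Real.sqrt_eq_rpow]
  have h : Real.sqrt 5 ^ 2 = 5 := Real.sq_sqrt (by norm_num)
  have h0 : Real.sqrt 5 ≠ 0 := by positivity
  unfold τ
  field_simp
  linear_combination -3 * h

lemma t_pos : 0 < τ := by linarith [t_gt]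

lemma K1 : k0 * τ ^ ((3:ℝ)/2) = (τ + 2) * s3 * X / 15 := by
  have hp := t_pos
  have := s_pos
  have := X_pos
  have := k0_pos
  rw [← sq_eq_sq₀ (by positivity) (by positivity), mul_pow, k0_sq, ← Real.rpow_natCast,
    ← Real.rpow_mul hp.le]
  norm_num
  have h1 := X_sq
  have h2 := t_sq
  have h3 := s_sq
  grind

lemma K2 : k0 * τ ^ (-((3:ℝ)/2)) = (3 * τ - 4) * s3 * X / 15 := by
  have hp := t_pos
  have := s_pos
  have := X_pos
  have := k0_pos
  have : 0 < 3 * τ - 4 := by linarith [t_gt]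
  rw [← sq_eq_sq₀ (by positivity) (by positivity), mul_pow, k0_sq, ← Real.rpow_natCast,
    ← Real.rpow_mul hp.le]
  norm_num
  have h1 := X_sq
  have h2 := t_sq
  have h3 := s_sq
  have h4 : (τ ^ 3)⁻¹ = 2 * τ - 3 := by
    apply inv_eq_of_mul_eq_one_right
    grind
  rw [h4]
  grind

lemma sX : (s3 * X) ^ 2 = 3 * (τ + 2) := by rw [mul_pow, s_sq, X_sq]

lemma sX_lt : s3 * X < 3.4 := by
  apply lt_of_pow_lt_pow_left₀ 2 (by norm_num)
  rw [sX]; linarith [t_lt]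

lemma sX_pos : 0 < s3 * X := mul_pos s_pos X_pos

lemma aa : a * a = (1 + (τ + 2) * s3 * X / 15) / 2 := by
  unfold a
  have := t_pos
  have := s_pos
  have := X_pos
  rw [K1, Real.mul_self_sqrt (by positivity)]

lemma bb : b * b = (1 + (3 * τ - 4) * s3 * X / 15) / 2 := by
  unfold b
  have : 0 < 3 * τ - 4 := by linarith [t_gt]
  have := s_pos
  have := X_pos
  rw [K2, Real.mul_self_sqrt (by positivity)]

lemma cc' : c * c = (1 - (3 * τ - 4) * s3 * X / 15) / 2 := by
  unfold c
  rw [K2, Real.mul_self_sqrt]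
  nlinarith [t_gt, t_lt, sX_lt, sX_pos]

lemma dd : d * d = (1 - (τ + 2) * s3 * X / 15) / 2 := by
  unfold d
  rw [K1, Real.mul_self_sqrt]
  nlinarith [t_gt, t_lt, sX_lt, sX_pos]

lemma prod_aux {p q P Q R : ℝ} (hp : 0 ≤ p) (hq : 0 ≤ q) (h1 : p * p = P) (h2 : q * q = Q)
    (hR : 0 ≤ R) (h : P * Q = R ^ 2) : p * q = R := by
  rw [← sq_eq_sq₀ (mul_nonneg hp hq) hR, ← h, ← h1, ← h2]; ring

lemma a0 : 0 ≤ a := Real.sqrt_nonneg _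
lemma b0 : 0 ≤ b := Real.sqrt_nonneg _
lemma c0 : 0 ≤ c := Real.sqrt_nonneg _
lemma d0 : 0 ≤ d := Real.sqrt_nonneg _

lemma X_lt : X < 1.93 := by
  apply lt_of_pow_lt_pow_left₀ 2 (by norm_num)
  rw [X_sq]; linarith [t_lt]
lemma X_gt : 1.89 < X := by
  apply lt_of_pow_lt_pow_left₀ 2 X_pos.le
  rw [X_sq]; linarith [t_gt]
lemma s_lt : s3 < 1.74 := by
  apply lt_of_pow_lt_pow_left₀ 2 (by norm_num)
  rw [s_sq]; norm_num
lemma s_gt : 1.73 < s3 := by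
  apply lt_of_pow_lt_pow_left₀ 2 s_pos.le
  rw [s_sq]; norm_num

lemma ab : a * b = (X * (3 - τ) / 5 + τ * s3 / 3) / 2 := by
  apply prod_aux a0 b0 aa bb
  · have := t_gt
    have := t_lt
    have := s_gt
    have := s_lt
    have := X_gt
    have := X_lt
    have := sX_pos
    nlinarith
  · have h1 := X_sq
    have h2 := t_sq
    have h3 := s_sq
    grind

lemma cd : c * d = (τ * s3 / 3 - X * (3 - τ) / 5) / 2 := by
  apply prod_aux c0 d0 cc' dd
  · have := t_gt
    have := t_lt
    have := s_gt
    have := s_lt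
    have := X_gt
    have := X_lt
    have := sX_pos
    nlinarith
  · have h1 := X_sq
    have h2 := t_sq
    have h3 := s_sq
    grind

lemma ac : a * c = (X * (2 * τ - 1) / 5 + (τ - 1) * s3 / 3) / 2 := by
  apply prod_aux a0 c0 aa cc'
  · have := t_gt
    have := t_lt
    have := s_gt
    have := s_lt
    have := X_gt
    have := X_lt
    have := sX_pos
    nlinarith
  · have h1 := X_sq
    have h2 := t_sq
    have h3 := s_sq
    grind

lemma bd : b * d = (X * (2 * τ - 1) / 5 - (τ - 1) * s3 / 3) / 2 := by
  apply prod_aux b0 d0 bb dd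
  · have := t_gt
    have := t_lt
    have := s_gt
    have := s_lt
    have := X_gt
    have := X_lt
    have := sX_pos
    nlinarith
  · have h1 := X_sq
    have h2 := t_sq
    have h3 := s_sq
    grind

lemma ad : a * d = (6 - 2 * τ) * s3 * X / 30 := by
  apply prod_aux a0 d0 aa dd
  · have := t_gt
    have := t_lt
    have := s_gt
    have := s_lt
    have := X_gt
    have := X_lt
    have := sX_pos
    nlinarith
  · have h1 := X_sq
    have h2 := t_sq
    have h3 := s_sq
    grind

lemma bc : b * c = (4 * τ - 2) * s3 * X / 30 := by
  apply prod_aux b0 c0 bb cc'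
  · have := t_gt
    have := t_lt
    have := s_gt
    have := s_lt
    have := X_gt
    have := X_lt
    have := sX_pos
    nlinarith
  · have h1 := X_sq
    have h2 := t_sq
    have h3 := s_sq
    grind


def U (n : ℕ) (p1 p2 p3 p4 : ℝ) : Fin 4 → ℂ :=
  ![(p1 : ℂ) * ω ^ (2 * n), (p2 : ℂ) * ω ^ (22 * n),
    (p3 : ℂ) * ω ^ (14 * n + 1), (p4 : ℂ) * ω ^ (26 * n + 1)]

def W (n : ℕ) (p1 p2 p3 p4 : ℝ) : Fin 4 → ℂ :=
  ![(p1 : ℂ) * ω ^ (2 * n + 29), (p2 : ℂ) * ω ^ (22 * n + 19),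
    (p3 : ℂ) * ω ^ (14 * n + 24), (p4 : ℂ) * ω ^ (26 * n + 18)]

lemma om_pow (m : ℕ) : ω ^ m = ⟨Real.cos (m * π / 30), Real.sin (m * π / 30)⟩ := by
  unfold ω
  rw [← Complex.exp_nat_mul, show (m : ℂ) * (π * Complex.I / 30) = ((m * π / 30 : ℝ) : ℂ) * Complex.I by
    push_cast; ring]
  apply Complex.ext
  · rw [Complex.exp_ofReal_mul_I_re]
  · rw [Complex.exp_ofReal_mul_I_im]

lemma term (p q : ℝ) (m k : ℕ) :
    ((p : ℂ) * ω ^ m * star ((q : ℂ) * ω ^ k)).re = p * q * Real.cos (m * π / 30 - k * π / 30) := by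
  rw [om_pow, om_pow, Real.cos_sub]
  simp [Complex.mul_re, Complex.mul_im]
  ring

lemma rUU (n : ℕ) (p1 p2 p3 p4 q1 q2 q3 q4 : ℝ) :
    rinner (U n p1 p2 p3 p4) (U n q1 q2 q3 q4) = p1 * q1 + p2 * q2 + p3 * q3 + p4 * q4 := by
  unfold rinner
  rw [Fin.sum_univ_four]
  simp only [Complex.add_re, U, Matrix.cons_val, term, sub_self, Real.cos_zero, mul_one]

lemma rWW (n : ℕ) (p1 p2 p3 p4 q1 q2 q3 q4 : ℝ) :
    rinner (W n p1 p2 p3 p4) (W n q1 q2 q3 q4) = p1 * q1 + p2 * q2 + p3 * q3 + p4 * q4 := by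
  unfold rinner
  rw [Fin.sum_univ_four]
  simp only [Complex.add_re, W, Matrix.cons_val, term, sub_self, Real.cos_zero, mul_one]

lemma rWU (n : ℕ) (p1 p2 p3 p4 q1 q2 q3 q4 : ℝ) :
    rinner (W n p1 p2 p3 p4) (U n q1 q2 q3 q4) =
      p1 * q1 * (-(s3 * τ + X * (τ - 1)) / 4) + p2 * q2 * (-(s3 * τ - X * (τ - 1)) / 4)
      + p3 * q3 * (-(s3 * (τ - 1) + X) / 4) + p4 * q4 * (-(X - s3 * (τ - 1)) / 4) := by
  unfold rinner
  rw [Fin.sum_univ_four, ← cos29, ← cos19, ← cos23, ← cos17]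
  simp only [Complex.add_re, U, W, Matrix.cons_val, term]
  congr 1; congr 1; congr 1
  all_goals (congr 2; push_cast; ring)

lemma rinner_symm (v w : Fin 4 → ℂ) : rinner v w = rinner w v := by
  unfold rinner
  simp only [Fin.sum_univ_four, Complex.add_re, Complex.mul_re, Complex.star_def, Complex.conj_re,
    Complex.conj_im]
  ring

lemma F_eq (n : Fin 30) : F n = W n r6 r7 r4 r1 := by
  simp [F, W]

lemma A_eq (n : Fin 30) : A n = U n r1 r4 r6 r7 := by
  simp [A, U]

lemma C_eq (n : Fin 30) : C n = W n r3 (-r2) r5 (-r8) := by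
  simp [C, W]

lemma D_eq (n : Fin 30) : D n = U n r4 (-r1) r7 (-r6) := by
  simp [D, U]

lemma B_eq (n : Fin 30) : B n = W n r2 r3 (-r8) (-r5) := by
  simp [B, W]

lemma E_eq (n : Fin 30) : E n = U n r5 r8 (-r2) (-r3) := by
  simp [E, U]

lemma G_eq (n : Fin 30) : G n = W n r7 (-r6) (-r1) r4 := by
  simp [G, W]

lemma H_eq (n : Fin 30) : H n = U n r8 (-r5) (-r3) r2 := by
  simp [H, U]

lemma r1_eq : r1 = a * (X * (2 * τ - 1) / 5) := by
  rw [r1, div_eq_mul_inv, inv9]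

lemma r2_eq : r2 = b * (X * (2 * τ - 1) / 5) := by
  rw [r2, div_eq_mul_inv, inv9]

lemma r3_eq : r3 = c * (X * (2 * τ - 1) / 5) := by
  rw [r3, div_eq_mul_inv, inv9]

lemma r4_eq : r4 = d * (X * (2 * τ - 1) / 5) := by
  rw [r4, div_eq_mul_inv, inv9]

lemma r5_eq : r5 = a * (X * (3 - τ) / 5) := by
  rw [r5, div_eq_mul_inv, inv3]

lemma r6_eq : r6 = b * (X * (3 - τ) / 5) := by
  rw [r6, div_eq_mul_inv, inv3]

lemma r7_eq : r7 = c * (X * (3 - τ) / 5) := by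
  rw [r7, div_eq_mul_inv, inv3]

lemma r8_eq : r8 = d * (X * (3 - τ) / 5) := by
  rw [r8, div_eq_mul_inv, inv3]

lemma maa (u v : ℝ) : a * u * (a * v) = ((1 + (τ + 2) * s3 * X / 15) / 2) * (u * v) := by
  rw [← aa]; ring

lemma mab (u v : ℝ) : a * u * (b * v) = ((X * (3 - τ) / 5 + τ * s3 / 3) / 2) * (u * v) := by
  rw [← ab]; ring

lemma mac (u v : ℝ) : a * u * (c * v) = ((X * (2 * τ - 1) / 5 + (τ - 1) * s3 / 3) / 2) * (u * v) := by
  rw [← ac]; ring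

lemma mad (u v : ℝ) : a * u * (d * v) = ((6 - 2 * τ) * s3 * X / 30) * (u * v) := by
  rw [← ad]; ring

lemma mba (u v : ℝ) : b * u * (a * v) = ((X * (3 - τ) / 5 + τ * s3 / 3) / 2) * (u * v) := by
  rw [← ab]; ring

lemma mbb (u v : ℝ) : b * u * (b * v) = ((1 + (3 * τ - 4) * s3 * X / 15) / 2) * (u * v) := by
  rw [← bb]; ring

lemma mbc (u v : ℝ) : b * u * (c * v) = ((4 * τ - 2) * s3 * X / 30) * (u * v) := by
  rw [← bc]; ring

lemma mbd (u v : ℝ) : b * u * (d * v) = ((X * (2 * τ - 1) / 5 - (τ - 1) * s3 / 3) / 2) * (u * v) := by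
  rw [← bd]; ring

lemma mca (u v : ℝ) : c * u * (a * v) = ((X * (2 * τ - 1) / 5 + (τ - 1) * s3 / 3) / 2) * (u * v) := by
  rw [← ac]; ring

lemma mcb (u v : ℝ) : c * u * (b * v) = ((4 * τ - 2) * s3 * X / 30) * (u * v) := by
  rw [← bc]; ring

lemma mcc (u v : ℝ) : c * u * (c * v) = ((1 - (3 * τ - 4) * s3 * X / 15) / 2) * (u * v) := by
  rw [← cc']; ring

lemma mcd (u v : ℝ) : c * u * (d * v) = ((τ * s3 / 3 - X * (3 - τ) / 5) / 2) * (u * v) := by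
  rw [← cd]; ring

lemma mda (u v : ℝ) : d * u * (a * v) = ((6 - 2 * τ) * s3 * X / 30) * (u * v) := by
  rw [← ad]; ring

lemma mdb (u v : ℝ) : d * u * (b * v) = ((X * (2 * τ - 1) / 5 - (τ - 1) * s3 / 3) / 2) * (u * v) := by
  rw [← bd]; ring

lemma mdc (u v : ℝ) : d * u * (c * v) = ((τ * s3 / 3 - X * (3 - τ) / 5) / 2) * (u * v) := by
  rw [← cd]; ring

lemma mdd (u v : ℝ) : d * u * (d * v) = ((1 - (τ + 2) * s3 * X / 15) / 2) * (u * v) := by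
  rw [← dd]; ring

lemma rUW (n : ℕ) (p1 p2 p3 p4 q1 q2 q3 q4 : ℝ) :
    rinner (U n q1 q2 q3 q4) (W n p1 p2 p3 p4) =
      p1 * q1 * (-(s3 * τ + X * (τ - 1)) / 4) + p2 * q2 * (-(s3 * τ - X * (τ - 1)) / 4)
      + p3 * q3 * (-(s3 * (τ - 1) + X) / 4) + p4 * q4 * (-(X - s3 * (τ - 1)) / 4) := by
  rw [rinner_symm, rWU]

/-- for each n, the eight vectors form a system of simple roots of
type E₈: their Gram matrix is G8, which is one half of a Cartan matrix of type E₈. -/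
theorem stmt11 :
    (∀ n : Fin 30, ∀ i j : Fin 8, rinner (simple n i) (simple n j) = G8 i j) ∧
    (∃ σ : Equiv.Perm (Fin 8), ∀ i j : Fin 8,
      G8 i j = (CartanMatrix.E₈ (σ i) (σ j) : ℝ) / 2) := by
  constructor
  · intro n i j
    have h1 := X_sq
    have h2 := t_sq
    have h3 := s_sq
    fin_cases i <;> fin_cases j <;>
    simp only [simple, G8, Matrix.of_apply, Matrix.cons_val, Fin.zero_eta, Fin.mk_one, Fin.reduceFinMk,
      A_eq, B_eq, C_eq, D_eq, E_eq, F_eq, G_eq, H_eq, rUU, rWW, rWU, rUW] <;>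
    simp only [neg_mul, mul_neg, neg_neg, r1_eq, r2_eq, r3_eq, r4_eq, r5_eq, r6_eq, r7_eq, r8_eq,
      maa, mab, mac, mad, mba, mbb, mbc, mbd,
      mca, mcb, mcc, mcd, mda, mdb, mdc, mdd]
    all_goals grind
  · refine ⟨⟨![1, 3, 2, 0, 4, 5, 6, 7], ![3, 0, 2, 1, 4, 5, 6, 7], by decide, by decide⟩, ?_⟩
    intro i j
    fin_cases i <;> fin_cases j <;> simp [G8, CartanMatrix.E₈]
    all_goals norm_num

end Triacontagonal
end
end

section
/- For each fixed n ∈ {0,…,29}, the eight vectors Aₙ, Bₙ, Cₙ, Dₙ, Eₙ, Fₙ, Gₙ, Hₙ are linearly independent over ℝ, hence form a basis of ℂ⁴ regarded as an 8-dimensional real vector space. In particular S spans ℂ⁴ over ℝ. -/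
noncomputable section
open Real Complex

namespace Triacontagonal

lemma a_pos : 0 < a := by
  unfold a k0 τ
  positivity

lemma b_pos : 0 < b := by
  unfold b k0 τ
  positivity

lemma cc_pos (m : ℤ) (h0 : 0 ≤ m) (h : m < 15) : 0 < cc m := by
  unfold cc
  have h0' : (0 : ℝ) ≤ m := by exact_mod_cast h0
  have h' : (m : ℝ) < 15 := by exact_mod_cast h
  have := Real.pi_pos
  have : 0 < Real.cos (m * Real.pi / 30) := by
    apply Real.cos_pos_of_mem_Ioo
    constructor
    · have : 0 ≤ m * Real.pi / 30 := by positivity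
      linarith
    · nlinarith
  positivity

lemma omega_pow (k : ℕ) : (ω ^ k).im = Real.sin (k * Real.pi / 30) := by
  have : ω ^ k = Complex.exp (((k * Real.pi / 30 : ℝ) : ℂ) * Complex.I) := by
    unfold ω
    rw [← Complex.exp_nat_mul]
    congr 1
    push_cast
    ring
  rw [this, Complex.exp_ofReal_mul_I_im]

lemma omega_ne : ω ≠ 0 := Complex.exp_ne_zero _

lemma indep_pow (m k : ℕ) (hk : 0 < k) (hk' : k < 30) (x y : ℝ)
    (h : (x : ℂ) * ω ^ m + (y : ℂ) * ω ^ (m + k) = 0) : x = 0 ∧ y = 0 := by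
  have h1 : ω ^ m * ((x : ℂ) + (y : ℂ) * ω ^ k) = 0 := by
    rw [← h, pow_add]; ring
  have h2 : (x : ℂ) + (y : ℂ) * ω ^ k = 0 :=
    (mul_eq_zero.1 h1).resolve_left (pow_ne_zero _ omega_ne)
  have h3 := congrArg Complex.im h2
  simp only [Complex.add_im, Complex.ofReal_im, Complex.im_ofReal_mul,
    Complex.zero_im, zero_add, omega_pow] at h3
  have hs : 0 < Real.sin (k * Real.pi / 30) := by
    have a1 : (0 : ℝ) < k := by exact_mod_cast hk
    have a2 : (k : ℝ) < 30 := by exact_mod_cast hk'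
    have := Real.pi_pos
    apply Real.sin_pos_of_pos_of_lt_pi
    · positivity
    · nlinarith
  have hy : y = 0 := (mul_eq_zero.1 h3).resolve_right hs.ne'
  subst hy
  simpa using h2

lemma two_sys (u v x y : ℝ) (hu : 0 < u) (h1 : u * x + v * y = 0) (h2 : v * x - u * y = 0) :
    x = 0 ∧ y = 0 := by
  have hp : u * u + v * v ≠ 0 := by nlinarith [mul_pos hu hu, mul_self_nonneg v]
  constructor
  · apply (mul_eq_zero.1 (_ : (u * u + v * v) * x = 0)).resolve_left hp
    linear_combination u * h1 + v * h2
  · apply (mul_eq_zero.1 (_ : (u * u + v * v) * y = 0)).resolve_left hp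
    linear_combination v * h1 - u * h2

lemma li (n : Fin 30) : LinearIndependent ℝ ![A n, B n, C n, D n, E n, F n, G n, H n] := by
  rw [Fintype.linearIndependent_iff]
  intro g hg
  have e0 := congrFun hg 0
  have e1 := congrFun hg 1
  have e2 := congrFun hg 2
  have e3 := congrFun hg 3
  simp [Fin.sum_univ_eight, A, B, C, D, E, F, G, H] at e0 e1 e2 e3
  obtain ⟨p1, q1⟩ := indep_pow (2 * n) 29 (by norm_num) (by norm_num)
    (r1 * g 0 + r4 * g 3 + r5 * g 4 + r8 * g 7) (r2 * g 1 + r3 * g 2 + r6 * g 5 + r7 * g 6)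
    (by push_cast; linear_combination e0)
  obtain ⟨p2, q2⟩ := indep_pow (22 * n) 19 (by norm_num) (by norm_num)
    (r4 * g 0 - r1 * g 3 + r8 * g 4 - r5 * g 7) (r3 * g 1 - r2 * g 2 + r7 * g 5 - r6 * g 6)
    (by push_cast; linear_combination e1)
  obtain ⟨p3, q3⟩ := indep_pow (14 * n + 1) 23 (by norm_num) (by norm_num)
    (r6 * g 0 + r7 * g 3 - r2 * g 4 - r3 * g 7) (-r8 * g 1 + r5 * g 2 + r4 * g 5 - r1 * g 6)
    (by push_cast; linear_combination e2)
  obtain ⟨p4, q4⟩ := indep_pow (26 * n + 1) 17 (by norm_num) (by norm_num)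
    (r7 * g 0 - r6 * g 3 - r3 * g 4 + r2 * g 7) (-r5 * g 1 - r8 * g 2 + r1 * g 5 + r4 * g 6)
    (by push_cast; linear_combination e3)
  have hp : 0 < (cc 9)⁻¹ := inv_pos.2 (cc_pos 9 (by norm_num) (by norm_num))
  simp only [r1, r2, r3, r4, r5, r6, r7, r8, div_eq_mul_inv] at p1 p2 p3 p4 q1 q2 q3 q4
  generalize (cc 9)⁻¹ = p at *
  generalize (cc 3)⁻¹ = q at *
  obtain ⟨s1, s2⟩ := two_sys a d (p * g 0 + q * g 4) (p * g 3 + q * g 7) a_pos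
    (by linear_combination p1) (by linear_combination p2)
  obtain ⟨s3, s4⟩ := two_sys b c (q * g 0 - p * g 4) (q * g 3 - p * g 7) b_pos
    (by linear_combination p3) (by linear_combination p4)
  obtain ⟨t1, t2⟩ := two_sys b c (p * g 1 + q * g 5) (p * g 2 + q * g 6) b_pos
    (by linear_combination q1) (by linear_combination q2)
  obtain ⟨t3, t4⟩ := two_sys a d (q * g 1 - p * g 5) (q * g 2 - p * g 6) a_pos
    (by linear_combination -q4) (by linear_combination -q3)
  obtain ⟨g0, g4⟩ := two_sys p q _ _ hp s1 s3
  obtain ⟨g3, g7⟩ := two_sys p q _ _ hp s2 s4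
  obtain ⟨g1, g5⟩ := two_sys p q _ _ hp t1 t3
  obtain ⟨g2, g6⟩ := two_sys p q _ _ hp t2 t4
  intro i
  fin_cases i <;> assumption

lemma sp (n : Fin 30) :
    Submodule.span ℝ (Set.range ![A n, B n, C n, D n, E n, F n, G n, H n]) = ⊤ := by
  apply (li n).span_eq_top_of_card_eq_finrank'
  rw [Module.finrank_pi_fintype]
  simp [Complex.finrank_real_complex]

/-- for each n the eight vectors are linearly independent over ℝ and
span ℂ⁴ as a real vector space; in particular S spans ℂ⁴ over ℝ. -/
theorem stmt12 :
    (∀ n : Fin 30,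
      LinearIndependent ℝ ![A n, B n, C n, D n, E n, F n, G n, H n] ∧
      Submodule.span ℝ (Set.range ![A n, B n, C n, D n, E n, F n, G n, H n]) = ⊤) ∧
    Submodule.span ℝ S = ⊤ := by
  refine ⟨fun n => ⟨li n, sp n⟩, ?_⟩
  rw [eq_top_iff, ← sp 0]
  apply Submodule.span_mono
  rintro _ ⟨i, rfl⟩
  refine ⟨0, ?_⟩
  fin_cases i <;> simp

end Triacontagonal
end
end
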